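/- (1) If 1/6 < a < 1/4 and 0 < σ < 1, then Z(σ,a) < 0 and P(σ,a) < 0. (2) If 0 < a < 1/6, then each of the functions σ ↦ Z(σ,a) and σ ↦ P(σ,a) has exactly one zero in the open interval (0,1), and that zero is simple; moreover these two zeros β_Z(a), β_P(a) satisfy β_Z(a) = 1 − β_P(a). -/

import Mathlib

open HurwitzZeta Complex

/-- `Z(s,a) = ζ(s,a) + ζ(s,1−a)`. -/
noncomputable def Zf (a : ℝ) : ℂ → ℂ :=
  fun s => hurwitzZeta a s + hurwitzZeta (1 - a : ℝ) s

/-- `P(s,a) = Li_s(e^{2πia}) + Li_s(e^{2πi(1−a)})`. -/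
noncomputable def Pf (a : ℝ) : ℂ → ℂ :=
  fun s => expZeta a s + expZeta (1 - a : ℝ) s

/-!
For `Re s > 0`, `Γ(s) · cosZeta a s` is the Mellin transform of the kernel
`k(t) = ∑_{n ≥ 1} cos (2πna) e^{-nt}`. With `c = cos (2πa)`, the sum `k(t)` has the sign of
`c - e^{-t}`: it is negative throughout if `c ≤ 0`, and otherwise changes sign exactly once, at
`τ = -log c`. In the second case `τ^{-σ} ∫ t^{σ-1} k(t) dt = ∫ (t/τ)^σ k(t) dt/t` is strictly
increasing in `σ`, because `log (t/τ) k(t) > 0` for `t ≠ τ`; so there is at most one positive real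
zero, and it is simple. Whether it lies in `(0, 1)` is read off at the endpoints:
`cosZeta a 0 = -1/2`, and `cosZeta a 1 = -log (2 - 2c) / 2` is positive exactly when `c > 1/2`.
The functional equation, whose factor is positive on `(0, 1)`, carries everything from
`cosZeta a` at `σ` to `hurwitzZetaEven a` at `1 - σ`.
-/

open Filter Topology MeasureTheory Asymptotics Set
open scoped Real

section RealMellin

variable {f : ℝ → ℝ} {σ τ a b : ℝ}

/-- The Mellin transform of a real function at a real point, as a real number. -/
noncomputable def realMellin (f : ℝ → ℝ) (σ : ℝ) : ℝ :=
  ∫ t in Ioi 0, t ^ (σ - 1) * f t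

lemma ofReal_cpow_sub_one_smul {t : ℝ} (ht : 0 < t) (y : ℝ) :
    (t : ℂ) ^ ((σ : ℂ) - 1) • (y : ℂ) = ((t ^ (σ - 1) * y : ℝ) : ℂ) := by
  rw [smul_eq_mul, ofReal_mul, ofReal_cpow ht.le, ofReal_sub, ofReal_one]

lemma mellin_ofReal (f : ℝ → ℝ) (σ : ℝ) :
    mellin (fun t => (f t : ℂ)) σ = (realMellin f σ : ℂ) := by
  rw [mellin, realMellin, ← integral_complex_ofReal]
  exact setIntegral_congr_fun measurableSet_Ioi fun t ht => ofReal_cpow_sub_one_smul ht (f t)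

lemma mellinConvergent_ofReal_iff :
    MellinConvergent (fun t => (f t : ℂ)) σ ↔
      IntegrableOn (fun t => t ^ (σ - 1) * f t) (Ioi 0) := by
  have hcongr : EqOn (fun t : ℝ => (t : ℂ) ^ ((σ : ℂ) - 1) • (f t : ℂ))
      (fun t => ((t ^ (σ - 1) * f t : ℝ) : ℂ)) (Ioi 0) :=
    fun t ht => ofReal_cpow_sub_one_smul ht (f t)
  rw [MellinConvergent, integrableOn_congr_fun hcongr measurableSet_Ioi]
  exact ⟨fun h => Integrable.re h, fun h => h.ofReal⟩

lemma realMellin_pos (hfi : IntegrableOn (fun t => t ^ (σ - 1) * f t) (Ioi 0))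
    (hf : ∀ᵐ t, 0 < t → 0 < f t) : 0 < realMellin f σ := by
  have hpos : ∀ᵐ t ∂volume.restrict (Ioi 0), 0 < t ^ (σ - 1) * f t := by
    rw [ae_restrict_iff' measurableSet_Ioi]
    exact hf.mono fun t h ht => mul_pos (Real.rpow_pos_of_pos ht _) (h ht)
  have hsupport : Function.support (fun t => t ^ (σ - 1) * f t)
      =ᵐ[volume.restrict (Ioi 0)] univ :=
    eventuallyEq_univ.2 (hpos.mono fun t h => h.ne')
  rw [realMellin, integral_pos_iff_support_of_nonneg_ae (hpos.mono fun t h => h.le) hfi,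
    measure_congr hsupport]
  simp

/-- `f` changes sign exactly once on `(0, ∞)`, at `τ`, from negative to positive; the value at `τ`
itself is left free. -/
structure ChangesSignAt (f : ℝ → ℝ) (τ : ℝ) : Prop where
  pos : 0 < τ
  neg_of_lt : ∀ t, 0 < t → t < τ → f t < 0
  pos_of_gt : ∀ t, τ < t → 0 < f t

lemma ChangesSignAt.log_mul_realMellin_lt (h : ChangesSignAt f τ)
    (hfi : IntegrableOn (fun t => t ^ (σ - 1) * f t) (Ioi 0))
    (hli : IntegrableOn (fun t => t ^ (σ - 1) * (Real.log t * f t)) (Ioi 0)) :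
    Real.log τ * realMellin f σ < realMellin (fun t => Real.log t * f t) σ := by
  have hexpand (t : ℝ) : t ^ (σ - 1) * (Real.log t * f t) - Real.log τ * (t ^ (σ - 1) * f t) =
      t ^ (σ - 1) * ((Real.log t - Real.log τ) * f t) := by ring
  rw [← sub_pos]
  have hint := hli.sub (hfi.const_mul (Real.log τ))
  calc 0 < realMellin (fun t => (Real.log t - Real.log τ) * f t) σ := by
        refine realMellin_pos (hint.congr_fun (fun t _ => hexpand t) measurableSet_Ioi) ?_
        filter_upwards [Measure.ae_ne volume τ] with t hne ht
        rcases lt_or_gt_of_ne hne with hlt | hgt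
        · exact mul_pos_of_neg_of_neg (sub_neg.2 (Real.log_lt_log ht hlt))
            (h.neg_of_lt t ht hlt)
        · exact mul_pos (sub_pos.2 (Real.log_lt_log h.pos hgt)) (h.pos_of_gt t hgt)
    _ = realMellin (fun t => Real.log t * f t) σ - Real.log τ * realMellin f σ := by
        simp only [realMellin, ← hexpand]
        rw [integral_sub hli (hfi.const_mul _), integral_const_mul]

lemma locallyIntegrableOn_ofReal {X : Type*} [MeasurableSpace X] [TopologicalSpace X]
    {μ : Measure X} {g : X → ℝ} {s : Set X} (hg : LocallyIntegrableOn g s μ) :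
    LocallyIntegrableOn (fun x => (g x : ℂ)) s μ := fun x hx =>
  let ⟨u, hu, hgu⟩ := hg x hx
  ⟨u, hu, hgu.ofReal⟩

lemma integrableOn_rpow_mul_of_isBigO (hf : LocallyIntegrableOn f (Ioi 0))
    (htop : f =O[atTop] (· ^ (-a))) (hσa : σ < a) (hbot : f =O[𝓝[>] 0] (· ^ (-b)))
    (hbσ : b < σ) : IntegrableOn (fun t => t ^ (σ - 1) * f t) (Ioi 0) :=
  mellinConvergent_ofReal_iff.1 <| mellinConvergent_of_isBigO_rpow (locallyIntegrableOn_ofReal hf)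
    (isBigO_ofReal_left.2 htop) hσa (isBigO_ofReal_left.2 hbot) hbσ

lemma hasDerivAt_mellin_ofReal (hf : LocallyIntegrableOn f (Ioi 0))
    (htop : f =O[atTop] (· ^ (-a))) (hσa : σ < a) (hbot : f =O[𝓝[>] 0] (· ^ (-b)))
    (hbσ : b < σ) :
    IntegrableOn (fun t => t ^ (σ - 1) * (Real.log t * f t)) (Ioi 0) ∧
      HasDerivAt (mellin fun t => (f t : ℂ)) (realMellin (fun t => Real.log t * f t) σ : ℂ) σ := by
  rw [← mellinConvergent_ofReal_iff, ← mellin_ofReal]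
  simpa only [ofReal_mul, real_smul] using
    mellin_hasDerivAt_of_isBigO_rpow (locallyIntegrableOn_ofReal hf)
      (isBigO_ofReal_left.2 htop) (s := σ) hσa (isBigO_ofReal_left.2 hbot) hbσ

lemma hasDerivAt_realMellin (hf : LocallyIntegrableOn f (Ioi 0))
    (htop : f =O[atTop] (· ^ (-a))) (hσa : σ < a) (hbot : f =O[𝓝[>] 0] (· ^ (-b)))
    (hbσ : b < σ) :
    HasDerivAt (realMellin f) (realMellin (fun t => Real.log t * f t) σ) σ := by
  simpa only [mellin_ofReal, ofReal_re] using
    (hasDerivAt_mellin_ofReal hf htop hσa hbot hbσ).2.real_of_complex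

lemma ChangesSignAt.strictMonoOn_rpow_neg_mul_realMellin (h : ChangesSignAt f τ)
    (hf : LocallyIntegrableOn f (Ioi 0)) (htop : f =O[atTop] (· ^ (-a)))
    (hbot : f =O[𝓝[>] 0] (· ^ (-b))) :
    StrictMonoOn (fun σ => τ ^ (-σ) * realMellin f σ) (Ioo b a) := by
  have hderiv (σ : ℝ) (hσ : σ ∈ Ioo b a) : HasDerivAt (fun σ => τ ^ (-σ) * realMellin f σ)
      (τ ^ (-σ) * (realMellin (fun t => Real.log t * f t) σ - Real.log τ * realMellin f σ)) σ :=
    (((hasDerivAt_neg σ).const_rpow h.pos).mul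
      (hasDerivAt_realMellin hf htop hσ.2 hbot hσ.1)).congr_deriv (by ring)
  refine strictMonoOn_of_hasDerivWithinAt_pos (convex_Ioo b a)
    (fun σ hσ => (hderiv σ hσ).continuousAt.continuousWithinAt)
    (fun σ hσ => (hderiv σ (interior_subset hσ)).hasDerivWithinAt) fun σ hσ => ?_
  obtain ⟨hbσ, hσa⟩ := interior_subset hσ
  exact mul_pos (Real.rpow_pos_of_pos h.pos _) <| sub_pos.2 <| h.log_mul_realMellin_lt
    (integrableOn_rpow_mul_of_isBigO hf htop hσa hbot hbσ)
    (hasDerivAt_mellin_ofReal hf htop hσa hbot hbσ).1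

end RealMellin

section CosSumKernel

variable {c t : ℝ}

/-- The sum of the series `∑_{n ≥ 1} cos (nθ) e^{-nt}` for `t > 0`, as a function of `t` and of
`c = cos θ`. -/
noncomputable def cosSumKernel (c t : ℝ) : ℝ :=
  Real.exp (-t) * (c - Real.exp (-t)) / (1 - 2 * c * Real.exp (-t) + Real.exp (-t) ^ 2)

lemma re_div_one_sub (w : ℂ) :
    (w / (1 - w)).re = (w.re - normSq w) / (1 - 2 * w.re + normSq w) := by
  have hden : normSq (1 - w) = 1 - 2 * w.re + normSq w := by
    rw [normSq_sub]; simp; ring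
  rw [div_re, ← add_div, hden]
  congr 1
  simp only [normSq_apply, sub_re, sub_im, one_re, one_im]
  ring

lemma hasSum_cosSumKernel (θ : ℝ) (ht : 0 < t) :
    HasSum (fun n : ℕ => Real.cos (θ * (n + 1)) * Real.exp (-(n + 1 : ℝ) * t))
      (cosSumKernel (Real.cos θ) t) := by
  set w : ℂ := exp (-t + θ * I) with hw
  have hnorm : ‖w‖ = Real.exp (-t) := by simp [hw, norm_exp]
  have hre : w.re = Real.exp (-t) * Real.cos θ := by simp [hw, exp_re]
  have hgeom : HasSum (fun n : ℕ => (w ^ (n + 1)).re) (w / (1 - w)).re := by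
    simp only [pow_succ', div_eq_mul_inv]
    exact hasSum_re ((hasSum_geometric_of_norm_lt_one (by simpa [hnorm] using ht)).mul_left w)
  have hterm (n : ℕ) :
      (w ^ (n + 1)).re = Real.cos (θ * (n + 1)) * Real.exp (-(n + 1 : ℝ) * t) := by
    have harg : ((n + 1 : ℕ) : ℂ) * (-t + θ * I) = ⟨-(n + 1 : ℝ) * t, θ * (n + 1)⟩ := by
      apply Complex.ext <;> simp <;> ring
    rw [hw, ← exp_nat_mul, harg, exp_re, mul_comm]
  have hsum : (w / (1 - w)).re = cosSumKernel (Real.cos θ) t := by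
    rw [re_div_one_sub, normSq_eq_norm_sq, hnorm, hre, cosSumKernel]
    congr 1 <;> ring
  simpa only [hterm, hsum] using hgeom

lemma half_one_sub_le_cosSumKernel_denom (hc : c ∈ Icc (-1) 1) {x : ℝ} (hx : 0 ≤ x) :
    (1 - c) / 2 ≤ 1 - 2 * c * x + x ^ 2 := by
  obtain ⟨hc₁, hc₂⟩ := hc
  nlinarith [mul_nonneg (sub_nonneg.2 hc₂) hx, sq_nonneg (1 - x)]

lemma cosSumKernel_denom_pos (hc : c ∈ Ico (-1) 1) {x : ℝ} (hx : 0 ≤ x) :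
    0 < 1 - 2 * c * x + x ^ 2 :=
  (half_pos (sub_pos.2 hc.2)).trans_le
    (half_one_sub_le_cosSumKernel_denom (Ico_subset_Icc_self hc) hx)

lemma cosSumKernel_neg (hc : c ∈ Ico (-1) 1) (h : c < Real.exp (-t)) : cosSumKernel c t < 0 :=
  div_neg_of_neg_of_pos (mul_neg_of_pos_of_neg (Real.exp_pos _) (sub_neg.2 h))
    (cosSumKernel_denom_pos hc (Real.exp_pos _).le)

lemma cosSumKernel_pos (hc : c ∈ Ico (-1) 1) (h : Real.exp (-t) < c) : 0 < cosSumKernel c t :=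
  div_pos (mul_pos (Real.exp_pos _) (sub_pos.2 h)) (cosSumKernel_denom_pos hc (Real.exp_pos _).le)

lemma changesSignAt_cosSumKernel (hc : c ∈ Ioo 0 1) :
    ChangesSignAt (cosSumKernel c) (-Real.log c) := by
  have hc' : c ∈ Ico (-1) 1 := ⟨by linarith [hc.1], hc.2⟩
  refine ⟨neg_pos.2 (Real.log_neg hc.1 hc.2), fun t _ ht => cosSumKernel_neg hc' ?_,
    fun t ht => cosSumKernel_pos hc' ?_⟩
  · exact (Real.log_lt_iff_lt_exp hc.1).1 (lt_neg.1 ht)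
  · exact (Real.lt_log_iff_exp_lt hc.1).1 (neg_lt.1 ht)

lemma continuous_cosSumKernel (hc : c ∈ Ico (-1) 1) : Continuous (cosSumKernel c) :=
  Continuous.div (by fun_prop) (by fun_prop)
    fun _ => (cosSumKernel_denom_pos hc (Real.exp_pos _).le).ne'

lemma locallyIntegrableOn_cosSumKernel (hc : c ∈ Ico (-1) 1) (s : Set ℝ) :
    LocallyIntegrableOn (cosSumKernel c) s :=
  (continuous_cosSumKernel hc).locallyIntegrable.locallyIntegrableOn s

lemma abs_cosSumKernel_le (hc : c ∈ Ico (-1) 1) (ht : 0 ≤ t) :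
    |cosSumKernel c t| ≤ 4 / (1 - c) * Real.exp (-t) := by
  have hexp : Real.exp (-t) ≤ 1 := Real.exp_le_one_iff.2 (neg_nonpos.2 ht)
  have hexp_pos : 0 < Real.exp (-t) := Real.exp_pos _
  have hc₂ : 0 < 1 - c := sub_pos.2 hc.2
  have hnum : |c - Real.exp (-t)| ≤ 2 := abs_le.2 ⟨by linarith [hc.1], by linarith [hc.2]⟩
  rw [cosSumKernel, abs_div, abs_mul, abs_of_pos hexp_pos,
    abs_of_pos (cosSumKernel_denom_pos hc hexp_pos.le)]
  calc Real.exp (-t) * |c - Real.exp (-t)| / (1 - 2 * c * Real.exp (-t) + Real.exp (-t) ^ 2)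
      ≤ Real.exp (-t) * 2 / ((1 - c) / 2) := by
        gcongr
        exact half_one_sub_le_cosSumKernel_denom (Ico_subset_Icc_self hc) hexp_pos.le
    _ = 4 / (1 - c) * Real.exp (-t) := by field_simp; norm_num

lemma cosSumKernel_isBigO_atTop (hc : c ∈ Ico (-1) 1) (r : ℝ) :
    cosSumKernel c =O[atTop] (· ^ (-r)) := by
  have hexp : cosSumKernel c =O[atTop] fun t : ℝ => Real.exp (-1 * t) := by
    refine IsBigO.of_bound (4 / (1 - c)) ?_
    filter_upwards [eventually_ge_atTop 0] with t ht
    simpa only [Real.norm_eq_abs, Real.abs_exp, neg_one_mul] using abs_cosSumKernel_le hc ht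
  exact hexp.trans (isLittleO_exp_neg_mul_rpow_atTop one_pos _).isBigO

lemma cosSumKernel_isBigO_nhdsGT_zero (hc : c ∈ Ico (-1) 1) :
    cosSumKernel c =O[𝓝[>] 0] fun t : ℝ => t ^ (-(0 : ℝ)) := by
  simpa only [neg_zero, Real.rpow_zero] using
    ((continuous_cosSumKernel hc).continuousAt.tendsto.isBigO_one ℝ).mono nhdsWithin_le_nhds

lemma integrableOn_rpow_mul_cosSumKernel (hc : c ∈ Ico (-1) 1) {σ : ℝ} (hσ : 0 < σ) :
    IntegrableOn (fun t => t ^ (σ - 1) * cosSumKernel c t) (Ioi 0) :=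
  integrableOn_rpow_mul_of_isBigO (locallyIntegrableOn_cosSumKernel hc _)
    (cosSumKernel_isBigO_atTop hc (σ + 1)) (lt_add_one σ) (cosSumKernel_isBigO_nhdsGT_zero hc) hσ

lemma hasDerivAt_half_log_cosSumKernel_denom (hc : c ∈ Ico (-1) 1) (t : ℝ) :
    HasDerivAt (fun t => Real.log (1 - 2 * c * Real.exp (-t) + Real.exp (-t) ^ 2) / 2)
      (cosSumKernel c t) t := by
  have hexp : HasDerivAt (fun t : ℝ => Real.exp (-t)) (-Real.exp (-t)) t := by
    simpa using (hasDerivAt_neg t).exp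
  have hdenom := cosSumKernel_denom_pos hc (Real.exp_pos (-t)).le
  refine (((((hexp.const_mul (2 * c)).const_sub 1).add (hexp.pow 2)).log
    hdenom.ne').div_const 2).congr_deriv ?_
  simp only [Pi.add_apply, Pi.pow_apply, cosSumKernel]
  rw [div_right_comm]
  congr 1
  push_cast
  ring

lemma tendsto_half_log_cosSumKernel_denom (c : ℝ) :
    Tendsto (fun t => Real.log (1 - 2 * c * Real.exp (-t) + Real.exp (-t) ^ 2) / 2)
      atTop (𝓝 0) := by
  have hexp : Tendsto (fun t : ℝ => Real.exp (-t)) atTop (𝓝 0) :=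
    Real.tendsto_exp_neg_atTop_nhds_zero
  have hdenom := ((hexp.const_mul (2 * c)).const_sub 1).add (hexp.pow 2)
  simpa using (hdenom.log (by norm_num)).div_const 2

lemma realMellin_cosSumKernel_one (hc : c ∈ Ico (-1) 1) :
    realMellin (cosSumKernel c) 1 = -(Real.log (2 - 2 * c) / 2) := by
  have hint := integrableOn_rpow_mul_cosSumKernel hc one_pos
  simp only [sub_self, Real.rpow_zero, one_mul] at hint
  simp only [realMellin, sub_self, Real.rpow_zero, one_mul]
  rw [integral_Ioi_of_hasDerivAt_of_tendsto'
    (fun t _ => hasDerivAt_half_log_cosSumKernel_denom hc t) hint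
    (tendsto_half_log_cosSumKernel_denom c)]
  norm_num
  ring_nf

lemma strictMonoOn_rpow_neg_mul_realMellin_cosSumKernel (hc : c ∈ Ioo 0 1) (r : ℝ) :
    StrictMonoOn (fun σ => (-Real.log c) ^ (-σ) * realMellin (cosSumKernel c) σ) (Ioo 0 r) := by
  have hc' : c ∈ Ico (-1) 1 := ⟨by linarith [hc.1], hc.2⟩
  exact (changesSignAt_cosSumKernel hc).strictMonoOn_rpow_neg_mul_realMellin
    (locallyIntegrableOn_cosSumKernel hc' _) (cosSumKernel_isBigO_atTop hc' r)
    (cosSumKernel_isBigO_nhdsGT_zero hc')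

lemma realMellin_cosSumKernel_neg_of_nonpos (hc : c ∈ Icc (-1) 0) {σ : ℝ} (hσ : 0 < σ) :
    realMellin (cosSumKernel c) σ < 0 := by
  have hc' : c ∈ Ico (-1) 1 := ⟨hc.1, hc.2.trans_lt one_pos⟩
  have hpos : 0 < realMellin (fun t => -cosSumKernel c t) σ := by
    refine realMellin_pos ?_ (.of_forall fun t _ => neg_pos.2 ?_)
    · exact (integrableOn_rpow_mul_cosSumKernel hc' hσ).neg.congr_fun
        (fun t _ => (mul_neg _ _).symm) measurableSet_Ioi
    · exact cosSumKernel_neg hc' (hc.2.trans_lt (Real.exp_pos _))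
  simpa only [realMellin, mul_neg, integral_neg, neg_pos] using hpos

lemma realMellin_cosSumKernel_neg (hc : c ∈ Icc (-1) (1 / 2)) {σ : ℝ} (hσ : σ ∈ Ioo 0 1) :
    realMellin (cosSumKernel c) σ < 0 := by
  rcases le_or_gt c 0 with hc₀ | hc₀
  · exact realMellin_cosSumKernel_neg_of_nonpos ⟨hc.1, hc₀⟩ hσ.1
  have hc₁ : c < 1 := by linarith [hc.2]
  have hτ : 0 < -Real.log c := neg_pos.2 (Real.log_neg hc₀ hc₁)
  have hone : realMellin (cosSumKernel c) 1 ≤ 0 := by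
    rw [realMellin_cosSumKernel_one ⟨hc.1, hc₁⟩]
    linarith [Real.log_nonneg (show 1 ≤ 2 - 2 * c by linarith [hc.2])]
  have hlt := strictMonoOn_rpow_neg_mul_realMellin_cosSumKernel ⟨hc₀, hc₁⟩ 2
    ⟨hσ.1, by linarith [hσ.2]⟩ ⟨one_pos, one_lt_two⟩ hσ.2
  have hscaled : (-Real.log c) ^ (-σ) * realMellin (cosSumKernel c) σ < 0 :=
    hlt.trans_le (mul_nonpos_of_nonneg_of_nonpos (Real.rpow_nonneg hτ.le _) hone)
  exact (pos_iff_neg_of_mul_neg hscaled).1 (Real.rpow_pos_of_pos hτ _)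

lemma realMellin_cosSumKernel_one_pos (hc : c ∈ Ioo (1 / 2) 1) :
    0 < realMellin (cosSumKernel c) 1 := by
  rw [realMellin_cosSumKernel_one ⟨by linarith [hc.1], hc.2⟩]
  linarith [Real.log_neg (show 0 < 2 - 2 * c by linarith [hc.2]) (by linarith [hc.1])]

lemma eq_of_realMellin_cosSumKernel_eq_zero (hc : c ∈ Ioo 0 1) {σ₁ σ₂ : ℝ} (h₁ : 0 < σ₁)
    (h₂ : 0 < σ₂) (hz₁ : realMellin (cosSumKernel c) σ₁ = 0)
    (hz₂ : realMellin (cosSumKernel c) σ₂ = 0) : σ₁ = σ₂ := by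
  refine (strictMonoOn_rpow_neg_mul_realMellin_cosSumKernel hc (max σ₁ σ₂ + 1)).injOn
    ⟨h₁, by grind⟩ ⟨h₂, by grind⟩ ?_
  simp only [hz₁, hz₂, mul_zero]

lemma deriv_mellin_cosSumKernel_ne_zero (hc : c ∈ Ioo 0 1) {σ : ℝ} (hσ : 0 < σ)
    (hz : realMellin (cosSumKernel c) σ = 0) :
    deriv (mellin fun t => (cosSumKernel c t : ℂ)) σ ≠ 0 := by
  have hc' : c ∈ Ico (-1) 1 := ⟨by linarith [hc.1], hc.2⟩
  obtain ⟨hint, hderiv⟩ := hasDerivAt_mellin_ofReal (locallyIntegrableOn_cosSumKernel hc' _)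
    (cosSumKernel_isBigO_atTop hc' (σ + 1)) (lt_add_one σ) (cosSumKernel_isBigO_nhdsGT_zero hc') hσ
  have hlt := (changesSignAt_cosSumKernel hc).log_mul_realMellin_lt
    (integrableOn_rpow_mul_cosSumKernel hc' hσ) hint
  rw [hz, mul_zero] at hlt
  rw [hderiv.deriv]
  exact ofReal_ne_zero.2 hlt.ne'

end CosSumKernel

lemma deriv_mul_of_right_eq_zero {𝕜 : Type*} [NontriviallyNormedField 𝕜] {u f : 𝕜 → 𝕜} {z : 𝕜}
    (hu : DifferentiableAt 𝕜 u z) (hf : DifferentiableAt 𝕜 f z) (hz : f z = 0) :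
    deriv (fun w => u w * f w) z = u z * deriv f z := by
  rw [deriv_fun_mul hu hf, hz, mul_zero, zero_add]

lemma ne_neg_natCast_of_re_pos {s : ℂ} (hs : 0 < s.re) (n : ℕ) : s ≠ -n := by
  rintro rfl
  simp at hs
  linarith [n.cast_nonneg (α := ℝ)]

section CosZeta

variable {a : ℝ} {s : ℂ} {σ : ℝ}

lemma coe_unitAddCircle_ne_zero_of_cos_lt_one (ha : Real.cos (2 * π * a) < 1) :
    (a : UnitAddCircle) ≠ 0 := by
  intro h
  obtain ⟨n, rfl⟩ := (AddCircle.coe_eq_zero_iff 1).1 h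
  refine ha.ne ((Real.cos_eq_one_iff _).2 ⟨n, ?_⟩)
  rw [zsmul_one]
  ring

lemma mellin_cosSumKernel_of_one_lt_re (a : ℝ) (hs : 1 < s.re) :
    mellin (fun t => (cosSumKernel (Real.cos (2 * π * a)) t : ℂ)) s = Gamma s * cosZeta a s := by
  have hkernel (t : ℝ) (ht : t ∈ Ioi 0) :
      HasSum (fun n : ℕ => (Real.cos (2 * π * a * (n + 1)) : ℂ) * Real.exp (-(n + 1 : ℝ) * t))
        (cosSumKernel (Real.cos (2 * π * a)) t : ℂ) := by
    exact_mod_cast hasSum_cosSumKernel (2 * π * a) ht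
  have hsummable :
      Summable fun n : ℕ => ‖(Real.cos (2 * π * a * (n + 1)) : ℂ)‖ / (n + 1 : ℝ) ^ s.re := by
    refine Summable.of_nonneg_of_le (fun n => by positivity) (fun n => ?_)
      ((summable_nat_add_iff 1).2 (Real.summable_one_div_nat_rpow.2 hs))
    rw [norm_real, Nat.cast_add_one]
    gcongr
    exact Real.abs_cos_le_one _
  have hmellin := hasSum_mellin (fun n => .inr n.cast_add_one_pos) (one_pos.trans hs) hkernel
    hsummable
  have hzeta := (hasSum_nat_add_iff' 1).2 ((hasSum_nat_cosZeta a hs).mul_left (Gamma s))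
  have hs₀ : s ≠ 0 := by rintro rfl; norm_num at hs
  simp only [Finset.sum_range_one, Nat.cast_zero, zero_cpow hs₀, div_zero, mul_zero,
    sub_zero] at hzeta
  refine hmellin.unique (hzeta.congr_fun fun n => ?_)
  push_cast
  ring

lemma mellin_cosSumKernel (ha : Real.cos (2 * π * a) < 1) (hs : 0 < s.re) :
    mellin (fun t => (cosSumKernel (Real.cos (2 * π * a)) t : ℂ)) s = Gamma s * cosZeta a s := by
  have hc : Real.cos (2 * π * a) ∈ Ico (-1) 1 := ⟨Real.neg_one_le_cos _, ha⟩
  have hopen (r : ℝ) : IsOpen {z : ℂ | r < z.re} := isOpen_lt continuous_const continuous_re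
  have hmellin : DifferentiableOn ℂ
      (mellin fun t => (cosSumKernel (Real.cos (2 * π * a)) t : ℂ)) {z | 0 < z.re} := fun z hz =>
    (mellin_differentiableAt_of_isBigO_rpow
      (locallyIntegrableOn_ofReal (locallyIntegrableOn_cosSumKernel hc _))
      (isBigO_ofReal_left.2 (cosSumKernel_isBigO_atTop hc (z.re + 1))) (lt_add_one _)
      (isBigO_ofReal_left.2 (cosSumKernel_isBigO_nhdsGT_zero hc)) hz).differentiableWithinAt
  have hzeta : DifferentiableOn ℂ (fun z => Gamma z * cosZeta a z) {z | 0 < z.re} := fun z hz =>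
    ((differentiableAt_Gamma z (ne_neg_natCast_of_re_pos hz)).mul
      (differentiable_cosZeta_of_ne_zero (coe_unitAddCircle_ne_zero_of_cos_lt_one ha)
        z)).differentiableWithinAt
  refine (hmellin.analyticOnNhd (hopen 0)).eqOn_of_preconnected_of_eventuallyEq
    (hzeta.analyticOnNhd (hopen 0)) (convex_halfSpace_re_gt 0).isPreconnected (z₀ := 2)
    (by simp) ?_ hs
  filter_upwards [(hopen 1).mem_nhds (show 1 < (2 : ℂ).re by simp)] with z hz
  exact mellin_cosSumKernel_of_one_lt_re a hz

lemma cosZeta_ofReal (ha : Real.cos (2 * π * a) < 1) (hσ : 0 < σ) :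
    cosZeta a σ = (realMellin (cosSumKernel (Real.cos (2 * π * a))) σ / Real.Gamma σ : ℝ) := by
  have hmellin := mellin_cosSumKernel ha (s := σ) hσ
  rw [mellin_ofReal, Gamma_ofReal] at hmellin
  have hGamma : (Real.Gamma σ : ℂ) ≠ 0 := ofReal_ne_zero.2 (Real.Gamma_pos_of_pos hσ).ne'
  rw [ofReal_div, hmellin, mul_div_cancel_left₀ _ hGamma]

lemma cosZeta_ofReal_eq_zero_iff (ha : Real.cos (2 * π * a) < 1) (hσ : 0 < σ) :
    cosZeta a σ = 0 ↔ realMellin (cosSumKernel (Real.cos (2 * π * a))) σ = 0 := by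
  rw [cosZeta_ofReal ha hσ, ofReal_eq_zero, div_eq_zero_iff,
    or_iff_left (Real.Gamma_pos_of_pos hσ).ne']

lemma re_cosZeta_neg (ha : Real.cos (2 * π * a) ≤ 1 / 2) (hσ : σ ∈ Ioo 0 1) :
    (cosZeta a σ).re < 0 := by
  rw [cosZeta_ofReal (by linarith) hσ.1, ofReal_re]
  exact div_neg_of_neg_of_pos (realMellin_cosSumKernel_neg ⟨Real.neg_one_le_cos _, ha⟩ hσ)
    (Real.Gamma_pos_of_pos hσ.1)

lemma exists_cosZeta_eq_zero (ha : Real.cos (2 * π * a) ∈ Ioo (1 / 2) 1) :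
    ∃ β : ℝ, β ∈ Ioo 0 1 ∧ cosZeta a β = 0 := by
  have hcont : Continuous fun x : ℝ => (cosZeta a x).re :=
    continuous_re.comp <| (differentiable_cosZeta_of_ne_zero
      (coe_unitAddCircle_ne_zero_of_cos_lt_one ha.2)).continuous.comp continuous_ofReal
  have hzero : (cosZeta a (0 : ℝ)).re < 0 := by
    rw [ofReal_zero, cosZeta_apply_zero]
    norm_num
  have hone : 0 < (cosZeta a (1 : ℝ)).re := by
    rw [cosZeta_ofReal ha.2 one_pos, ofReal_re, Real.Gamma_one, div_one]
    exact realMellin_cosSumKernel_one_pos ha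
  obtain ⟨β, hβ, hre⟩ := intermediate_value_Ioo zero_le_one hcont.continuousOn ⟨hzero, hone⟩
  refine ⟨β, hβ, Complex.ext hre ?_⟩
  rw [cosZeta_ofReal ha.2 hβ.1, ofReal_im, zero_im]

lemma eq_of_cosZeta_eq_zero (ha : Real.cos (2 * π * a) ∈ Ioo 0 1) {σ₁ σ₂ : ℝ} (h₁ : 0 < σ₁)
    (h₂ : 0 < σ₂) (hz₁ : cosZeta a σ₁ = 0) (hz₂ : cosZeta a σ₂ = 0) : σ₁ = σ₂ :=
  eq_of_realMellin_cosSumKernel_eq_zero ha h₁ h₂ ((cosZeta_ofReal_eq_zero_iff ha.2 h₁).1 hz₁)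
    ((cosZeta_ofReal_eq_zero_iff ha.2 h₂).1 hz₂)

lemma deriv_cosZeta_ne_zero (ha : Real.cos (2 * π * a) ∈ Ioo 0 1) (hσ : 0 < σ)
    (hz : cosZeta a σ = 0) : deriv (cosZeta a) σ ≠ 0 := by
  have hmellin : (mellin fun t => (cosSumKernel (Real.cos (2 * π * a)) t : ℂ)) =ᶠ[𝓝 (σ : ℂ)]
      fun z => Gamma z * cosZeta a z := by
    filter_upwards [(isOpen_lt continuous_const continuous_re).mem_nhds
      (show 0 < (σ : ℂ).re from hσ)] with z hz
    exact mellin_cosSumKernel ha.2 hz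
  have hderiv := deriv_mellin_cosSumKernel_ne_zero ha hσ
    ((cosZeta_ofReal_eq_zero_iff ha.2 hσ).1 hz)
  rw [hmellin.deriv_eq, deriv_mul_of_right_eq_zero
    (differentiableAt_Gamma _ (ne_neg_natCast_of_re_pos hσ))
    (differentiable_cosZeta_of_ne_zero (coe_unitAddCircle_ne_zero_of_cos_lt_one ha.2) _) hz]
    at hderiv
  exact right_ne_zero_of_mul hderiv

end CosZeta

section FunctionalEquation

variable {a : UnitAddCircle} {s : ℂ} {σ : ℝ}

/-- The factor `2 (2π)^{-s} Γ(s) cos(πs/2)` of the functional equation, which takes the cosine zeta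
function at `s` to the even Hurwitz zeta function at `1 - s`. -/
noncomputable def evenFEFactor (s : ℂ) : ℂ :=
  2 * (2 * π) ^ (-s) * Gamma s * cos (π * s / 2)

lemma hurwitzZetaEven_one_sub_eq_evenFEFactor_mul (ha : a ≠ 0) (hs : 0 < s.re) :
    hurwitzZetaEven a (1 - s) = evenFEFactor s * cosZeta a s :=
  hurwitzZetaEven_one_sub a (ne_neg_natCast_of_re_pos hs) (.inl ha)

lemma differentiableAt_evenFEFactor (hs : 0 < s.re) : DifferentiableAt ℂ evenFEFactor s := by
  have hbase : (2 * π : ℂ) ≠ 0 := mul_ne_zero two_ne_zero (ofReal_ne_zero.2 Real.pi_ne_zero)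
  exact (((differentiableAt_id.neg.const_cpow (.inl hbase)).const_mul 2).mul
    (differentiableAt_Gamma s (ne_neg_natCast_of_re_pos hs))).mul (by fun_prop)

lemma exists_pos_evenFEFactor_ofReal_eq (hσ : σ ∈ Ioo 0 1) :
    ∃ q : ℝ, 0 < q ∧ evenFEFactor σ = q := by
  refine ⟨2 * (2 * π) ^ (-σ) * Real.Gamma σ * Real.cos (π * σ / 2), ?_, ?_⟩
  · have hcos : 0 < Real.cos (π * σ / 2) :=
      Real.cos_pos_of_mem_Ioo ⟨by nlinarith [Real.pi_pos, hσ.1], by nlinarith [Real.pi_pos, hσ.2]⟩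
    have hGamma : 0 < Real.Gamma σ := Real.Gamma_pos_of_pos hσ.1
    positivity
  · rw [evenFEFactor, Gamma_ofReal]
    push_cast [ofReal_cpow Real.two_pi_pos.le]
    rfl

lemma re_hurwitzZetaEven_one_sub_neg_iff (ha : a ≠ 0) (hσ : σ ∈ Ioo 0 1) :
    (hurwitzZetaEven a (1 - σ)).re < 0 ↔ (cosZeta a σ).re < 0 := by
  obtain ⟨q, hq, hfactor⟩ := exists_pos_evenFEFactor_ofReal_eq hσ
  rw [hurwitzZetaEven_one_sub_eq_evenFEFactor_mul ha hσ.1, hfactor, re_ofReal_mul]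
  exact ⟨fun h => (pos_iff_neg_of_mul_neg h).1 hq, mul_neg_of_pos_of_neg hq⟩

lemma evenFEFactor_ofReal_ne_zero (hσ : σ ∈ Ioo 0 1) : evenFEFactor σ ≠ 0 := by
  obtain ⟨q, hq, hfactor⟩ := exists_pos_evenFEFactor_ofReal_eq hσ
  exact hfactor ▸ ofReal_ne_zero.2 hq.ne'

lemma hurwitzZetaEven_one_sub_eq_zero_iff (ha : a ≠ 0) (hσ : σ ∈ Ioo 0 1) :
    hurwitzZetaEven a (1 - σ) = 0 ↔ cosZeta a σ = 0 := by
  rw [hurwitzZetaEven_one_sub_eq_evenFEFactor_mul ha hσ.1, mul_eq_zero,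
    or_iff_right (evenFEFactor_ofReal_ne_zero hσ)]

lemma deriv_hurwitzZetaEven_one_sub (ha : a ≠ 0) (hs : 0 < s.re) (hz : cosZeta a s = 0) :
    deriv (hurwitzZetaEven a) (1 - s) = -(evenFEFactor s * deriv (cosZeta a) s) := by
  have hFE : (fun z => hurwitzZetaEven a (1 - z)) =ᶠ[𝓝 s]
      fun z => evenFEFactor z * cosZeta a z := by
    filter_upwards [(isOpen_lt continuous_const continuous_re).mem_nhds hs] with z hz
    exact hurwitzZetaEven_one_sub_eq_evenFEFactor_mul ha hz
  rw [← deriv_mul_of_right_eq_zero (differentiableAt_evenFEFactor hs)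
    (differentiable_cosZeta_of_ne_zero ha s) hz, ← hFE.deriv_eq, deriv_comp_const_sub, neg_neg]

end FunctionalEquation

lemma coe_one_sub_unitAddCircle (a : ℝ) : ((1 - a : ℝ) : UnitAddCircle) = -a := by
  rw [AddCircle.coe_sub, AddCircle.coe_period, zero_sub]

lemma Zf_eq_two_mul_hurwitzZetaEven (a : ℝ) : Zf a = fun s => 2 * hurwitzZetaEven a s := by
  funext s
  rw [Zf, hurwitzZetaEven_eq, coe_one_sub_unitAddCircle]
  ring

lemma Pf_eq_two_mul_cosZeta (a : ℝ) : Pf a = fun s => 2 * cosZeta a s := by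
  funext s
  rw [Pf, cosZeta_eq, coe_one_sub_unitAddCircle]
  ring

lemma Zf_re_neg_and_Pf_re_neg {a σ : ℝ} (ha : Real.cos (2 * π * a) ≤ 1 / 2)
    (hσ : σ ∈ Ioo 0 1) : (Zf a σ).re < 0 ∧ (Pf a σ).re < 0 := by
  have hσ' : 1 - σ ∈ Ioo 0 1 := ⟨sub_pos.2 hσ.2, sub_lt_self 1 hσ.1⟩
  have hZ := (re_hurwitzZetaEven_one_sub_neg_iff
    (coe_unitAddCircle_ne_zero_of_cos_lt_one (by linarith)) hσ').2 (re_cosZeta_neg ha hσ')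
  rw [ofReal_sub, ofReal_one, sub_sub_cancel] at hZ
  have hP := re_cosZeta_neg ha hσ
  rw [Zf_eq_two_mul_hurwitzZetaEven, Pf_eq_two_mul_cosZeta]
  simpa using And.intro (mul_neg_of_pos_of_neg two_pos hZ) (mul_neg_of_pos_of_neg two_pos hP)

theorem Z_P_zeros_in_unit_interval_general :
    (∀ a : ℝ, Real.cos (2 * π * a) ≤ 1 / 2 → ∀ σ : ℝ, 0 < σ → σ < 1 →
      (Zf a (σ : ℂ)).re < 0 ∧ (Pf a (σ : ℂ)).re < 0) ∧
    (∀ a : ℝ, 1 / 2 < Real.cos (2 * π * a) → Real.cos (2 * π * a) < 1 →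
      ∃ βZ βP : ℝ, βZ ∈ Set.Ioo (0 : ℝ) 1 ∧ βP ∈ Set.Ioo (0 : ℝ) 1 ∧
        Zf a (βZ : ℂ) = 0 ∧ deriv (Zf a) (βZ : ℂ) ≠ 0 ∧
        (∀ σ ∈ Set.Ioo (0 : ℝ) 1, Zf a (σ : ℂ) = 0 → σ = βZ) ∧
        Pf a (βP : ℂ) = 0 ∧ deriv (Pf a) (βP : ℂ) ≠ 0 ∧
        (∀ σ ∈ Set.Ioo (0 : ℝ) 1, Pf a (σ : ℂ) = 0 → σ = βP) ∧
        βZ = 1 - βP) := by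
  refine ⟨fun a ha σ hσ₀ hσ₁ => Zf_re_neg_and_Pf_re_neg ha ⟨hσ₀, hσ₁⟩, fun a ha ha₁ => ?_⟩
  have ha₀ := coe_unitAddCircle_ne_zero_of_cos_lt_one ha₁
  have hc : Real.cos (2 * π * a) ∈ Ioo 0 1 := ⟨by linarith, ha₁⟩
  have hreflect {σ : ℝ} (hσ : σ ∈ Ioo 0 1) : 1 - σ ∈ Ioo 0 1 :=
    ⟨sub_pos.2 hσ.2, sub_lt_self 1 hσ.1⟩
  obtain ⟨β, hβ, hz⟩ := exists_cosZeta_eq_zero ⟨ha, ha₁⟩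
  have hderiv := deriv_cosZeta_ne_zero hc hβ.1 hz
  have hunique (σ : ℝ) (hσ : σ ∈ Ioo 0 1) (h : cosZeta a σ = 0) : σ = β :=
    eq_of_cosZeta_eq_zero hc hσ.1 hβ.1 h hz
  simp only [Zf_eq_two_mul_hurwitzZetaEven, Pf_eq_two_mul_cosZeta, deriv_const_mul_field',
    mul_eq_zero, two_ne_zero, false_or, ne_eq]
  refine ⟨1 - β, β, hreflect hβ, hβ, ?_, ?_, fun σ hσ h => ?_, hz, hderiv, hunique, rfl⟩
  · rw [ofReal_sub, ofReal_one]
    exact (hurwitzZetaEven_one_sub_eq_zero_iff ha₀ hβ).2 hz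
  · rw [ofReal_sub, ofReal_one, deriv_hurwitzZetaEven_one_sub ha₀ hβ.1 hz]
    exact neg_ne_zero.2 (mul_ne_zero (evenFEFactor_ofReal_ne_zero hβ) hderiv)
  · suffices hz' : cosZeta a ((1 - σ : ℝ) : ℂ) = 0 by linarith [hunique _ (hreflect hσ) hz']
    rw [← hurwitzZetaEven_one_sub_eq_zero_iff ha₀ (hreflect hσ)]
    simpa using h

lemma cos_two_pi_mul_one_sixth : Real.cos (2 * π * (1 / 6)) = 1 / 2 := by
  rw [← Real.cos_pi_div_three]
  congr 1
  ring

lemma strictAntiOn_cos_two_pi_mul :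
    StrictAntiOn (fun a => Real.cos (2 * π * a)) (Icc 0 (1 / 2)) := fun x hx y hy hxy =>
  Real.strictAntiOn_cos ⟨by nlinarith [Real.pi_pos, hx.1], by nlinarith [Real.pi_pos, hx.2]⟩
    ⟨by nlinarith [Real.pi_pos, hy.1], by nlinarith [Real.pi_pos, hy.2]⟩
    (mul_lt_mul_of_pos_left hxy Real.two_pi_pos)

lemma cos_two_pi_mul_le_half {a : ℝ} (ha : a ∈ Icc (1 / 6) (1 / 2)) :
    Real.cos (2 * π * a) ≤ 1 / 2 :=
  cos_two_pi_mul_one_sixth ▸ strictAntiOn_cos_two_pi_mul.antitoneOn (by norm_num)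
    ⟨by linarith [ha.1], ha.2⟩ ha.1

lemma cos_two_pi_mul_mem_Ioo {a : ℝ} (ha : a ∈ Ioo 0 (1 / 6)) :
    Real.cos (2 * π * a) ∈ Ioo (1 / 2) 1 := by
  have ha' : a ∈ Icc (0 : ℝ) (1 / 2) := ⟨ha.1.le, by linarith [ha.2]⟩
  constructor
  · exact cos_two_pi_mul_one_sixth ▸ strictAntiOn_cos_two_pi_mul ha' (by norm_num) ha.2
  · simpa using strictAntiOn_cos_two_pi_mul (by norm_num) ha' ha.1

/-- (1) for `1/6 < a < 1/4` and `0 < σ < 1`, `Z(σ,a) < 0` and `P(σ,a) < 0`;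
(2) for `0 < a < 1/6`, each of `Z(·,a)` and `P(·,a)` has exactly one zero in `(0,1)`, both
zeros are simple, and they satisfy `β_Z(a) = 1 − β_P(a)`. -/
theorem Z_P_zeros_in_unit_interval :
    (∀ a : ℝ, 1 / 6 < a → a < 1 / 4 → ∀ σ : ℝ, 0 < σ → σ < 1 →
      (Zf a (σ : ℂ)).re < 0 ∧ (Pf a (σ : ℂ)).re < 0) ∧
    (∀ a : ℝ, 0 < a → a < 1 / 6 →
      ∃ βZ βP : ℝ, βZ ∈ Set.Ioo (0 : ℝ) 1 ∧ βP ∈ Set.Ioo (0 : ℝ) 1 ∧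
        Zf a (βZ : ℂ) = 0 ∧ deriv (Zf a) (βZ : ℂ) ≠ 0 ∧
        (∀ σ ∈ Set.Ioo (0 : ℝ) 1, Zf a (σ : ℂ) = 0 → σ = βZ) ∧
        Pf a (βP : ℂ) = 0 ∧ deriv (Pf a) (βP : ℂ) ≠ 0 ∧
        (∀ σ ∈ Set.Ioo (0 : ℝ) 1, Pf a (σ : ℂ) = 0 → σ = βP) ∧
        βZ = 1 - βP) := by
  obtain ⟨hneg, hzeros⟩ := Z_P_zeros_in_unit_interval_general
  exact ⟨fun a h₁ h₂ => hneg a (cos_two_pi_mul_le_half ⟨h₁.le, by linarith⟩),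
    fun a h₁ h₂ => (cos_two_pi_mul_mem_Ioo ⟨h₁, h₂⟩).elim (hzeros a)⟩
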